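/- arXiv:0911.4703 — 2 statements merged into one kernel-verified Lean document; each statement's English description precedes it below -/
import Mathlib

section
/- Assume ρ0⁺ > ρ0⁻ and σ k² < g(ρ0⁺ − ρ0⁻). Then there exists s₀ > 0, depending only on m, ℓ, g, σ, k and the profiles ρ0, p, ε0, δ0, such that μ(s) < 0 for all 0 < s ≤ s₀. In particular, for every 0 < s ≤ s₀ there exists an admissible pair (φ,ψ) with J(φ,ψ) = 1 and E(φ,ψ;s) < 0. -/
open Set MeasureTheory intervalIntegral Filter Topology

noncomputable section

namespace RT

/-- The piecewise integral `∫_{-m}^0 + ∫_0^ℓ`. -/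
def pwInt (m l : ℝ) (f : ℝ → ℝ) : ℝ :=
  (∫ x in (-m)..(0:ℝ), f x) + ∫ x in (0:ℝ)..l, f x

/-- `f` restricted to `[-m,0)` extends continuously to `[-m,0]`, and `f` restricted to
`(0,ℓ]` extends continuously to `[0,ℓ]`. -/
def PiecewiseCont (m l : ℝ) (f : ℝ → ℝ) : Prop :=
  (∃ F : ℝ → ℝ, ContinuousOn F (Icc (-m) 0) ∧ EqOn f F (Ico (-m) 0)) ∧
  (∃ F : ℝ → ℝ, ContinuousOn F (Icc 0 l) ∧ EqOn f F (Ioc 0 l))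

/-- A profile function: the restriction to `[-m,0)` extends continuously to `[-m,0]`, and
the function is continuous on `[0,ℓ]` (hence right-continuous at `0`). -/
def Profile (m l : ℝ) (f : ℝ → ℝ) : Prop :=
  (∃ F : ℝ → ℝ, ContinuousOn F (Icc (-m) 0) ∧ EqOn f F (Ico (-m) 0)) ∧
  ContinuousOn f (Icc 0 l)

/-- The four steady-state profiles `ρ0, p, ε0, δ0` with their positivity assumptions. -/
def ProfilesHyp (m l : ℝ) (ρ0 p ε0 δ0 : ℝ → ℝ) : Prop :=
  Profile m l ρ0 ∧ Profile m l p ∧ Profile m l ε0 ∧ Profile m l δ0 ∧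
  (∀ x ∈ Icc (-m) l, 0 < ρ0 x) ∧ (∀ x ∈ Icc (-m) l, 0 < p x) ∧
  (∀ x ∈ Icc (-m) l, 0 < ε0 x) ∧ (∀ x ∈ Icc (-m) l, 0 ≤ δ0 x)

/-- `f` is continuous on `[-m,ℓ]` and continuously differentiable on `[-m,0]` and on
`[0,ℓ]`, with piecewise derivative `fd`. -/
def PiecewiseC1 (m l : ℝ) (f fd : ℝ → ℝ) : Prop :=
  ContinuousOn f (Icc (-m) l) ∧
  (∀ x ∈ Ico (-m) 0, HasDerivWithinAt f (fd x) (Icc (-m) 0) x) ∧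
  (∀ x ∈ Ioc 0 l, HasDerivWithinAt f (fd x) (Icc 0 l) x) ∧
  PiecewiseCont m l fd

/-- An admissible pair `(φ,ψ)` with piecewise derivatives `(φd,ψd)`. -/
def Admissible (m l : ℝ) (φ ψ φd ψd : ℝ → ℝ) : Prop :=
  PiecewiseC1 m l φ φd ∧ PiecewiseC1 m l ψ ψd ∧
  φ (-m) = 0 ∧ φ l = 0 ∧ ψ (-m) = 0 ∧ ψ l = 0

/-- The energy `E(φ,ψ;s)`. -/
def energyE (m l g σ k : ℝ) (ρ0 p ε0 δ0 : ℝ → ℝ) (φ ψ φd ψd : ℝ → ℝ) (s : ℝ) : ℝ :=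
  σ * k ^ 2 / 2 * (ψ 0) ^ 2
  + (1 / 2) * pwInt m l (fun x =>
      (s * δ0 x + p x * ρ0 x) * (ψd x + k * φ x) ^ 2 - 2 * g * ρ0 x * k * φ x * ψ x)
  + (s / 2) * pwInt m l (fun x =>
      ε0 x * ((φd x - k * ψ x) ^ 2 + (ψd x - k * φ x) ^ 2
        + (1 / 3) * (ψd x + k * φ x) ^ 2))

/-- The normalization functional `J(φ,ψ)`. -/
def energyJ (m l : ℝ) (ρ0 : ℝ → ℝ) (φ ψ : ℝ → ℝ) : ℝ :=
  (1 / 2) * pwInt m l (fun x => ρ0 x * ((φ x) ^ 2 + (ψ x) ^ 2))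

/-- The viscous part `E1(φ,ψ)` of the energy. -/
def energyE1 (m l k : ℝ) (ε0 δ0 : ℝ → ℝ) (φ ψ φd ψd : ℝ → ℝ) : ℝ :=
  (1 / 2) * pwInt m l (fun x => (δ0 x + ε0 x / 3) * (ψd x + k * φ x) ^ 2)
  + (1 / 2) * pwInt m l (fun x =>
      ε0 x * ((φd x - k * ψ x) ^ 2 + (ψd x - k * φ x) ^ 2))

/-- `μ(s)`: the infimum of `E(·,·;s)` over admissible pairs with `J = 1`. -/
def muInf (m l g σ k : ℝ) (ρ0 p ε0 δ0 : ℝ → ℝ) (s : ℝ) : ℝ :=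
  sInf { e : ℝ | ∃ φ ψ φd ψd : ℝ → ℝ, Admissible m l φ ψ φd ψd ∧
    energyJ m l ρ0 φ ψ = 1 ∧ e = energyE m l g σ k ρ0 p ε0 δ0 φ ψ φd ψd s }

/-- The hydrostatic steady-state relation `ρ0' = -g ρ0 / p` on each piece. -/
def Hydrostatic (m l g : ℝ) (ρ0 p : ℝ → ℝ) : Prop :=
  (∀ x ∈ Ico (-m) 0, HasDerivWithinAt ρ0 (-g * ρ0 x / p x) (Ico (-m) 0) x) ∧
  (∀ x ∈ Ioc 0 l, HasDerivWithinAt ρ0 (-g * ρ0 x / p x) (Ioc 0 l) x)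

end RT

namespace RT

lemma PiecewiseCont.op2 {m l : ℝ} {f g : ℝ → ℝ} (o : ℝ → ℝ → ℝ)
    (ho : Continuous (fun q : ℝ × ℝ => o q.1 q.2))
    (hf : PiecewiseCont m l f) (hg : PiecewiseCont m l g) :
    PiecewiseCont m l (fun x => o (f x) (g x)) := by
  obtain ⟨⟨F1, hF1, e1⟩, ⟨F2, hF2, e2⟩⟩ := hf
  obtain ⟨⟨G1, hG1, d1⟩, ⟨G2, hG2, d2⟩⟩ := hg
  refine ⟨⟨fun x => o (F1 x) (G1 x), ho.comp_continuousOn (hF1.prodMk hG1), ?_⟩,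
    ⟨fun x => o (F2 x) (G2 x), ho.comp_continuousOn (hF2.prodMk hG2), ?_⟩⟩
  · intro x hx
    simp only [e1 hx, d1 hx]
  · intro x hx
    simp only [e2 hx, d2 hx]

lemma PiecewiseCont.add' {m l : ℝ} {f g : ℝ → ℝ}
    (hf : PiecewiseCont m l f) (hg : PiecewiseCont m l g) :
    PiecewiseCont m l (fun x => f x + g x) :=
  hf.op2 (fun a b => a + b) (by fun_prop) hg

lemma PiecewiseCont.sub' {m l : ℝ} {f g : ℝ → ℝ}
    (hf : PiecewiseCont m l f) (hg : PiecewiseCont m l g) :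
    PiecewiseCont m l (fun x => f x - g x) :=
  hf.op2 (fun a b => a - b) (by fun_prop) hg

lemma PiecewiseCont.mul' {m l : ℝ} {f g : ℝ → ℝ}
    (hf : PiecewiseCont m l f) (hg : PiecewiseCont m l g) :
    PiecewiseCont m l (fun x => f x * g x) :=
  hf.op2 (fun a b => a * b) (by fun_prop) hg

lemma PiecewiseCont.pow' {m l : ℝ} {f : ℝ → ℝ}
    (hf : PiecewiseCont m l f) (n : ℕ) :
    PiecewiseCont m l (fun x => f x ^ n) :=
  hf.op2 (fun a _ => a ^ n) (by fun_prop) hf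

lemma PiecewiseCont.const_mul' {m l : ℝ} {f : ℝ → ℝ}
    (hf : PiecewiseCont m l f) (c : ℝ) :
    PiecewiseCont m l (fun x => c * f x) :=
  hf.op2 (fun a _ => c * a) (by fun_prop) hf

lemma pwc_of_continuousOn {m l : ℝ} (hm : 0 < m) (hl : 0 < l) {f : ℝ → ℝ}
    (hf : ContinuousOn f (Icc (-m) l)) : PiecewiseCont m l f :=
  ⟨⟨f, hf.mono (Icc_subset_Icc le_rfl hl.le), fun _ _ => rfl⟩,
   ⟨f, hf.mono (Icc_subset_Icc (by linarith) le_rfl), fun _ _ => rfl⟩⟩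

lemma Profile.pwc {m l : ℝ} {f : ℝ → ℝ} (hf : Profile m l f) : PiecewiseCont m l f :=
  ⟨hf.1, ⟨f, hf.2, fun _ _ => rfl⟩⟩

lemma PiecewiseCont.intL {m l : ℝ} (hm : 0 < m) {f : ℝ → ℝ} (hf : PiecewiseCont m l f) :
    IntervalIntegrable f volume (-m) 0 := by
  obtain ⟨⟨F, hF, e⟩, -⟩ := hf
  have hle : -m ≤ (0:ℝ) := by linarith
  have h1 : IntervalIntegrable F volume (-m) 0 :=
    ContinuousOn.intervalIntegrable (by rwa [uIcc_of_le hle])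
  rw [intervalIntegrable_iff_integrableOn_Ioo_of_le hle] at h1 ⊢
  exact h1.congr_fun (fun x hx => (e ⟨hx.1.le, hx.2⟩).symm) measurableSet_Ioo

lemma PiecewiseCont.intR {m l : ℝ} (hl : 0 < l) {f : ℝ → ℝ} (hf : PiecewiseCont m l f) :
    IntervalIntegrable f volume 0 l := by
  obtain ⟨-, ⟨F, hF, e⟩⟩ := hf
  have h1 : IntervalIntegrable F volume 0 l :=
    ContinuousOn.intervalIntegrable (by rwa [uIcc_of_le hl.le])
  rw [intervalIntegrable_iff_integrableOn_Ioo_of_le hl.le] at h1 ⊢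
  exact h1.congr_fun (fun x hx => (e ⟨hx.1, hx.2.le⟩).symm) measurableSet_Ioo

lemma pwInt_const_mul (m l c : ℝ) (f : ℝ → ℝ) :
    pwInt m l (fun x => c * f x) = c * pwInt m l f := by
  simp only [pwInt, intervalIntegral.integral_const_mul]; ring

lemma pwInt_add {m l : ℝ} (hm : 0 < m) (hl : 0 < l) {f g : ℝ → ℝ}
    (hf : PiecewiseCont m l f) (hg : PiecewiseCont m l g) :
    pwInt m l (fun x => f x + g x) = pwInt m l f + pwInt m l g := by
  simp only [pwInt]
  rw [intervalIntegral.integral_add (hf.intL hm) (hg.intL hm),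
    intervalIntegral.integral_add (hf.intR hl) (hg.intR hl)]
  ring

lemma pwInt_nonneg {m l : ℝ} (hm : 0 < m) (hl : 0 < l) {f : ℝ → ℝ}
    (hf : ∀ x ∈ Icc (-m) l, 0 ≤ f x) : 0 ≤ pwInt m l f := by
  refine add_nonneg ?_ ?_
  · exact intervalIntegral.integral_nonneg (by linarith)
      (fun x hx => hf x ⟨hx.1, hx.2.trans hl.le⟩)
  · exact intervalIntegral.integral_nonneg hl.le
      (fun x hx => hf x ⟨by linarith [hx.1], hx.2⟩)

lemma energy_lower {m l g σ k s : ℝ} {ρ0 p ε0 δ0 φ ψ φd ψd : ℝ → ℝ}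
    (hm : 0 < m) (hl : 0 < l) (hg : 0 < g) (hσ : 0 ≤ σ) (hk : 0 < k) (hs : 0 < s)
    (hprof : ProfilesHyp m l ρ0 p ε0 δ0) (ha : Admissible m l φ ψ φd ψd) :
    -(g * k) * energyJ m l ρ0 φ ψ ≤ energyE m l g σ k ρ0 p ε0 δ0 φ ψ φd ψd s := by
  obtain ⟨hρ, hp, hε, hδ, ρpos, ppos, εpos, δpos⟩ := hprof
  obtain ⟨h1, h2, -⟩ := ha
  have cφ := pwc_of_continuousOn hm hl h1.1
  have cψ := pwc_of_continuousOn hm hl h2.1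
  have cψd := h2.2.2.2
  have cA : PiecewiseCont m l (fun x =>
      (s * δ0 x + p x * ρ0 x) * (ψd x + k * φ x) ^ 2 - 2 * g * ρ0 x * k * φ x * ψ x) := by
    refine PiecewiseCont.sub' (PiecewiseCont.mul' ((hδ.pwc.const_mul' s).add' (hp.pwc.mul' hρ.pwc))
      ((cψd.add' (cφ.const_mul' k)).pow' 2)) ?_
    have := ((hρ.pwc.mul' cφ).mul' cψ).const_mul' (2 * g * k)
    convert this using 2
    ring
  have cB : PiecewiseCont m l (fun x => (g * k) * (ρ0 x * ((φ x) ^ 2 + (ψ x) ^ 2))) :=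
    (hρ.pwc.mul' ((cφ.pow' 2).add' (cψ.pow' 2))).const_mul' (g * k)
  have hsum := pwInt_add hm hl cA cB
  rw [pwInt_const_mul] at hsum
  have n1 : 0 ≤ pwInt m l (fun x =>
      ((s * δ0 x + p x * ρ0 x) * (ψd x + k * φ x) ^ 2 - 2 * g * ρ0 x * k * φ x * ψ x)
      + (g * k) * (ρ0 x * ((φ x) ^ 2 + (ψ x) ^ 2))) := by
    refine pwInt_nonneg hm hl (fun x hx => ?_)
    have a1 := ρpos x hx
    have a2 := ppos x hx
    have a3 := δpos x hx
    have : 0 ≤ (s * δ0 x + p x * ρ0 x) * (ψd x + k * φ x) ^ 2 := by positivity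
    have h3 : 0 ≤ g * k * ρ0 x * (φ x - ψ x) ^ 2 := by positivity
    nlinarith
  have n2 : 0 ≤ pwInt m l (fun x =>
      ε0 x * ((φd x - k * ψ x) ^ 2 + (ψd x - k * φ x) ^ 2
        + (1 / 3) * (ψd x + k * φ x) ^ 2)) := by
    refine pwInt_nonneg hm hl (fun x hx => ?_)
    have a1 := εpos x hx
    positivity
  have n3 : 0 ≤ σ * k ^ 2 / 2 * (ψ 0) ^ 2 := by positivity
  have n4 := mul_nonneg (by positivity : 0 ≤ s / 2) n2
  unfold energyE energyJ
  linarith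

lemma hasDerivAt_maxpow (n : ℕ) (y : ℝ) :
    HasDerivAt (fun t : ℝ => (max 0 t) ^ (n + 2)) ((n + 2) * (max 0 y) ^ (n + 1)) y := by
  rcases lt_trichotomy y 0 with h | h | h
  · rw [max_eq_left h.le]
    have : (fun t : ℝ => (max 0 t) ^ (n + 2)) =ᶠ[𝓝 y] fun _ => 0 := by
      filter_upwards [Iio_mem_nhds h] with t ht
      rw [max_eq_left (le_of_lt ht)]; simp
    simpa using (hasDerivAt_const y (0:ℝ)).congr_of_eventuallyEq this
  · subst h
    have : HasFDerivAt (fun t : ℝ => (max 0 t) ^ (n + 2)) (0 : ℝ →L[ℝ] ℝ) 0 := by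
      refine Asymptotics.IsBigO.hasFDerivAt (n := n + 2) ?_ (by omega)
      refine Asymptotics.IsBigO.of_bound 1 (Eventually.of_forall fun t => ?_)
      simp only [sub_zero, norm_pow, one_mul, Real.norm_eq_abs]
      gcongr
      exact max_le (abs_nonneg t) (le_abs_self t)
    simpa using this.hasDerivAt
  · rw [max_eq_right h.le]
    have : (fun t : ℝ => (max 0 t) ^ (n + 2)) =ᶠ[𝓝 y] fun t => t ^ (n + 2) := by
      filter_upwards [Ioi_mem_nhds h] with t ht
      rw [max_eq_right (le_of_lt ht)]
    have h2 := (hasDerivAt_pow (n + 2) y).congr_of_eventuallyEq this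
    have e : ((n + 2 : ℕ) : ℝ) * y ^ (n + 2 - 1) = ((n:ℝ) + 2) * y ^ (n + 1) := by
      push_cast
      rfl
    rw [e] at h2
    exact h2

/-- The truncated parabola. -/
def uu (h x : ℝ) : ℝ := max 0 (h ^ 2 - x ^ 2)

lemma uu_cont (h : ℝ) : Continuous (uu h) := by
  unfold uu; fun_prop

lemma uu_nonneg (h x : ℝ) : 0 ≤ uu h x := le_max_left _ _

lemma uu_zero (h : ℝ) : uu h 0 = h ^ 2 := by
  unfold uu; rw [max_eq_right] <;> nlinarith [sq_nonneg h]

lemma uu_out {h x : ℝ} (hh : 0 < h) (hx : h ≤ |x|) : uu h x = 0 := by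
  unfold uu; rw [max_eq_left]
  have : h ^ 2 ≤ |x| ^ 2 := by gcongr
  rw [sq_abs] at this; linarith

lemma uu_deriv (h : ℝ) (n : ℕ) (x : ℝ) :
    HasDerivAt (fun t => uu h t ^ (n + 2)) (-(2 * (n + 2)) * x * uu h x ^ (n + 1)) x := by
  have h1 : HasDerivAt (fun t : ℝ => h ^ 2 - t ^ 2) (-(2 * x)) x := by
    simpa using (hasDerivAt_pow 2 x).const_sub (h ^ 2)
  have h2 := (hasDerivAt_maxpow n (h ^ 2 - x ^ 2)).comp x h1
  have e : -(2 * ((n:ℝ) + 2)) * x * uu h x ^ (n + 1)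
      = ((n:ℝ) + 2) * max 0 (h ^ 2 - x ^ 2) ^ (n + 1) * -(2 * x) := by
    unfold uu; ring
  rw [e]
  exact h2

lemma pwC1_of {m l : ℝ} (hm : 0 < m) (hl : 0 < l) {f fd : ℝ → ℝ}
    (h : ∀ x, HasDerivAt f (fd x) x) (hc : Continuous fd) : PiecewiseC1 m l f fd := by
  refine ⟨fun x _ => (h x).continuousAt.continuousWithinAt,
    fun x _ => (h x).hasDerivWithinAt, fun x _ => (h x).hasDerivWithinAt,
    pwc_of_continuousOn hm hl hc.continuousOn⟩

lemma key_integral {m l ρm η h : ℝ} {ρ0 : ℝ → ℝ} (hm : 0 < m) (hl : 0 < l) (hh : 0 < h)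
    (hhm : h ≤ m) (hhl : h ≤ l) (hρ : Profile m l ρ0)
    (hL : ∀ x ∈ Ioo (-h) 0, ρ0 x ≤ ρm + η) (hR : ∀ x ∈ Ioo 0 h, ρ0 0 - η ≤ ρ0 x) :
    pwInt m l (fun x => ρ0 x * (-12 * x * uu h x ^ 5)) ≤ (ρm - ρ0 0 + 2 * η) * h ^ 12 := by
  have hu := uu_cont h
  have hwc : Continuous (fun x => -12 * x * uu h x ^ 5) := by fun_prop
  have hw : ∀ x, HasDerivAt (fun t => uu h t ^ 6) (-12 * x * uu h x ^ 5) x := by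
    intro x
    convert uu_deriv h 4 x using 1
    norm_num
  have ftc : ∀ a b : ℝ, ∫ x in a..b, (-12 * x * uu h x ^ 5) = uu h b ^ 6 - uu h a ^ 6 :=
    fun a b => intervalIntegral.integral_eq_sub_of_hasDerivAt (fun x _ => hw x)
      (hwc.intervalIntegrable a b)
  have pc : PiecewiseCont m l (fun x => ρ0 x * (-12 * x * uu h x ^ 5)) :=
    hρ.pwc.mul' (pwc_of_continuousOn hm hl hwc.continuousOn)
  have u1 : uu h (-m) = 0 := uu_out hh (by rw [abs_neg, abs_of_pos hm]; exact hhm)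
  have u2 : uu h l = 0 := uu_out hh (by rw [abs_of_pos hl]; exact hhl)
  have i1 : ∫ x in (-m)..0, ρ0 x * (-12 * x * uu h x ^ 5) ≤ (ρm + η) * h ^ 12 := by
    have : ∫ x in (-m)..0, (ρm + η) * (-12 * x * uu h x ^ 5) = (ρm + η) * h ^ 12 := by
      rw [intervalIntegral.integral_const_mul, ftc, u1, uu_zero]; ring
    rw [← this]
    refine intervalIntegral.integral_mono_on_of_le_Ioo (by linarith) (pc.intL hm)
      ((hwc.const_mul (ρm + η)).intervalIntegrable _ _) (fun x hx => ?_)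
    by_cases hxh : -h < x
    · refine mul_le_mul_of_nonneg_right (hL x ⟨hxh, hx.2⟩) ?_
      exact mul_nonneg (by linarith [hx.2]) (pow_nonneg (uu_nonneg _ _) _)
    · rw [uu_out hh (by rw [abs_of_neg hx.2]; linarith)]; simp
  have i2 : ∫ x in 0..l, ρ0 x * (-12 * x * uu h x ^ 5) ≤ (ρ0 0 - η) * -h ^ 12 := by
    have : ∫ x in 0..l, (ρ0 0 - η) * (-12 * x * uu h x ^ 5) = (ρ0 0 - η) * -h ^ 12 := by
      rw [intervalIntegral.integral_const_mul, ftc, u2, uu_zero]; ring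
    rw [← this]
    refine intervalIntegral.integral_mono_on_of_le_Ioo hl.le (pc.intR hl)
      ((hwc.const_mul (ρ0 0 - η)).intervalIntegrable _ _) (fun x hx => ?_)
    by_cases hxh : x < h
    · refine mul_le_mul_of_nonpos_right (hR x ⟨hx.1, hxh⟩) ?_
      exact mul_nonpos_of_nonpos_of_nonneg (by linarith [hx.1]) (pow_nonneg (uu_nonneg _ _) _)
    · rw [uu_out hh (by rw [abs_of_pos hx.1]; linarith)]; simp
  unfold pwInt
  linarith

lemma energyE_scale (m l g σ k : ℝ) (ρ0 p ε0 δ0 φ ψ φd ψd : ℝ → ℝ) (s c : ℝ) :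
    energyE m l g σ k ρ0 p ε0 δ0 (fun x => c * φ x) (fun x => c * ψ x) (fun x => c * φd x)
      (fun x => c * ψd x) s = c ^ 2 * energyE m l g σ k ρ0 p ε0 δ0 φ ψ φd ψd s := by
  unfold energyE
  have e1 : (fun x => (s * δ0 x + p x * ρ0 x) * (c * ψd x + k * (c * φ x)) ^ 2
      - 2 * g * ρ0 x * k * (c * φ x) * (c * ψ x)) = fun x => c ^ 2 *
      ((s * δ0 x + p x * ρ0 x) * (ψd x + k * φ x) ^ 2 - 2 * g * ρ0 x * k * φ x * ψ x) := by
    funext x; ring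
  have e2 : (fun x => ε0 x * ((c * φd x - k * (c * ψ x)) ^ 2 + (c * ψd x - k * (c * φ x)) ^ 2
        + (1 / 3) * (c * ψd x + k * (c * φ x)) ^ 2)) = fun x => c ^ 2 *
        (ε0 x * ((φd x - k * ψ x) ^ 2 + (ψd x - k * φ x) ^ 2
        + (1 / 3) * (ψd x + k * φ x) ^ 2)) := by
    funext x; ring
  rw [e1, e2, pwInt_const_mul, pwInt_const_mul]
  ring

lemma energyJ_scale (m l : ℝ) (ρ0 φ ψ : ℝ → ℝ) (c : ℝ) :
    energyJ m l ρ0 (fun x => c * φ x) (fun x => c * ψ x) = c ^ 2 * energyJ m l ρ0 φ ψ := by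
  unfold energyJ
  have e1 : (fun x => ρ0 x * ((c * φ x) ^ 2 + (c * ψ x) ^ 2)) = fun x => c ^ 2 *
      (ρ0 x * ((φ x) ^ 2 + (ψ x) ^ 2)) := by
    funext x; ring
  rw [e1, pwInt_const_mul]
  ring


/-- If `ρ0⁺ > ρ0⁻` and `σ k² < g (ρ0⁺ - ρ0⁻)`, then `μ(s) < 0` for all sufficiently
small `s > 0`; in particular for every such `s` there is an admissible pair with
`J(φ,ψ) = 1` and negative energy. Here `ρ0⁺ = ρ0 0` and `ρ0⁻` is the left limit of `ρ0`
at `0`. -/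
theorem muInf_negative_for_small_s (m l g σ k : ℝ) (ρ0 p ε0 δ0 : ℝ → ℝ) (ρ0minus : ℝ)
    (hm : 0 < m) (hl : 0 < l) (hg : 0 < g) (hσ : 0 ≤ σ) (hk : 0 < k)
    (hprof : ProfilesHyp m l ρ0 p ε0 δ0)
    (hhydro : Hydrostatic m l g ρ0 p)
    (hρm : Tendsto ρ0 (𝓝[<] 0) (𝓝 ρ0minus))
    (hjump : ρ0minus < ρ0 0)
    (hσk : σ * k ^ 2 < g * (ρ0 0 - ρ0minus)) :
    ∃ s₀ : ℝ, 0 < s₀ ∧ ∀ s : ℝ, 0 < s → s ≤ s₀ →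
      muInf m l g σ k ρ0 p ε0 δ0 s < 0 ∧
      ∃ φ ψ φd ψd : ℝ → ℝ, Admissible m l φ ψ φd ψd ∧
        energyJ m l ρ0 φ ψ = 1 ∧
        energyE m l g σ k ρ0 p ε0 δ0 φ ψ φd ψd s < 0 := by
  obtain ⟨hρ, hp, hε, hδ, ρpos, ppos, εpos, δpos⟩ := id hprof
  obtain ⟨η, hη, hη2⟩ : ∃ η : ℝ, 0 < η ∧ σ * k ^ 2 + g * (ρ0minus - ρ0 0 + 2 * η) < 0 := by
    refine ⟨(g * (ρ0 0 - ρ0minus) - σ * k ^ 2) / (4 * g), ?_, ?_⟩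
    · apply div_pos <;> linarith
    · have : g * ((g * (ρ0 0 - ρ0minus) - σ * k ^ 2) / (4 * g))
          = (g * (ρ0 0 - ρ0minus) - σ * k ^ 2) / 4 := by field_simp
      linarith
  obtain ⟨a, ha, hL⟩ : ∃ a : ℝ, a < 0 ∧ ∀ x ∈ Ioo a 0, ρ0 x ≤ ρ0minus + η := by
    have h1 : ∀ᶠ x in 𝓝[<] (0:ℝ), ρ0 x ≤ ρ0minus + η :=
      (hρm.eventually (Iio_mem_nhds (by linarith : ρ0minus < ρ0minus + η))).mono
        (fun x hx => le_of_lt hx)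
    obtain ⟨a, ha, h2⟩ := (mem_nhdsLT_iff_exists_Ioo_subset).1 h1
    exact ⟨a, ha, fun x hx => h2 hx⟩
  obtain ⟨b, hb, hR⟩ : ∃ b : ℝ, 0 < b ∧ ∀ x ∈ Ioo 0 b, ρ0 0 - η ≤ ρ0 x := by
    have h0 : Tendsto ρ0 (𝓝[>] 0) (𝓝 (ρ0 0)) := by
      have := hρ.2 0 ⟨le_rfl, hl.le⟩
      rw [← nhdsWithin_Ioc_eq_nhdsGT hl]
      exact this.mono_left (nhdsWithin_mono _ Ioc_subset_Icc_self)
    have h1 : ∀ᶠ x in 𝓝[>] (0:ℝ), ρ0 0 - η ≤ ρ0 x :=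
      (h0.eventually (Ioi_mem_nhds (by linarith : ρ0 0 - η < ρ0 0))).mono
        (fun x hx => le_of_lt hx)
    obtain ⟨b, hb, h2⟩ := (mem_nhdsGT_iff_exists_Ioo_subset).1 h1
    exact ⟨b, hb, fun x hx => h2 hx⟩
  obtain ⟨h, hh, hhm, hhl, hha, hhb⟩ : ∃ h : ℝ, 0 < h ∧ h ≤ m ∧ h ≤ l ∧ h ≤ -a ∧ h ≤ b :=
    ⟨min (min m l) (min (-a) b), by simp [hm, hl, ha, hb], by simp, by simp, by simp, by simp⟩
  have key := key_integral (ρm := ρ0minus) (η := η) hm hl hh hhm hhl hρ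
    (fun x hx => hL x ⟨by linarith [hx.1], hx.2⟩)
    (fun x hx => hR x ⟨hx.1, by linarith [hx.2]⟩)
  have hu := uu_cont h
  set ψ : ℝ → ℝ := fun x => uu h x ^ 3 with hψ
  set ψd : ℝ → ℝ := fun x => -6 * x * uu h x ^ 2 with hψd
  set φ : ℝ → ℝ := fun x => (6 / k) * (x * uu h x ^ 2) with hφ
  set φd : ℝ → ℝ := fun x => (6 / k) * (1 * uu h x ^ 2 + x * (-4 * x * uu h x)) with hφd
  have dψ : ∀ x, HasDerivAt ψ (ψd x) x := by
    intro x
    convert uu_deriv h 1 x using 1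
    simp only [hψd]; norm_num
  have dφ : ∀ x, HasDerivAt φ (φd x) x := by
    intro x
    have h2 : HasDerivAt (fun t => uu h t ^ 2) (-4 * x * uu h x) x := by
      convert uu_deriv h 0 x using 1
      norm_num
    exact ((hasDerivAt_id x).mul h2).const_mul (6 / k)
  have u1 : uu h (-m) = 0 := uu_out hh (by rw [abs_neg, abs_of_pos hm]; exact hhm)
  have u2 : uu h l = 0 := uu_out hh (by rw [abs_of_pos hl]; exact hhl)
  have hJ : 0 < energyJ m l ρ0 φ ψ := by
    unfold energyJ pwInt
    have cc : ContinuousOn (fun x => ρ0 x * ((φ x) ^ 2 + (ψ x) ^ 2)) (Icc 0 l) := by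
      refine hρ.2.mul (Continuous.continuousOn ?_)
      fun_prop
    have p1 : 0 < ∫ x in 0..l, ρ0 x * ((φ x) ^ 2 + (ψ x) ^ 2) := by
      refine intervalIntegral.integral_pos hl cc (fun x hx => ?_) ⟨0, ⟨le_rfl, hl.le⟩, ?_⟩
      · have := ρpos x ⟨by linarith [hx.1], hx.2⟩
        positivity
      · have := ρpos 0 ⟨by linarith, hl.le⟩
        simp only [hφ, hψ, uu_zero]
        positivity
    have p2 : 0 ≤ ∫ x in (-m)..0, ρ0 x * ((φ x) ^ 2 + (ψ x) ^ 2) := by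
      refine intervalIntegral.integral_nonneg (by linarith) (fun x hx => ?_)
      have := ρpos x ⟨hx.1, by linarith [hx.2]⟩
      positivity
    linarith
  set B := pwInt m l (fun x => ε0 x * ((φd x - k * ψ x) ^ 2 + (ψd x - k * φ x) ^ 2
        + (1 / 3) * (ψd x + k * φ x) ^ 2)) with hB
  have hB0 : 0 ≤ B := by
    refine pwInt_nonneg hm hl (fun x hx => ?_)
    have a1 := εpos x hx
    positivity
  set A := (σ * k ^ 2 + g * (ρ0minus - ρ0 0 + 2 * η)) * h ^ 12 / 2 with hA
  have hA0 : A < 0 := by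
    have : (σ * k ^ 2 + g * (ρ0minus - ρ0 0 + 2 * η)) * h ^ 12 < 0 :=
      mul_neg_of_neg_of_pos hη2 (by positivity)
    linarith
  have hE : ∀ s, energyE m l g σ k ρ0 p ε0 δ0 φ ψ φd ψd s ≤ A + s / 2 * B := by
    intro s
    unfold energyE
    rw [← hB]
    have e1 : (fun x => (s * δ0 x + p x * ρ0 x) * (ψd x + k * φ x) ^ 2
        - 2 * g * ρ0 x * k * φ x * ψ x) =
        fun x => g * (ρ0 x * (-12 * x * uu h x ^ 5)) := by
      funext x
      have hz : k * φ x = 6 * x * uu h x ^ 2 := by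
        simp only [hφ]; field_simp
      have hz2 : ψd x + k * φ x = 0 := by rw [hz]; simp only [hψd]; ring
      have : 2 * g * ρ0 x * k * φ x * ψ x = 2 * g * ρ0 x * (k * φ x) * ψ x := by ring
      rw [hz2, this, hz]; simp only [hψ]; ring
    rw [e1, pwInt_const_mul]
    have h0 : ψ 0 = h ^ 6 := by simp only [hψ, uu_zero]; ring
    rw [h0]
    have := mul_le_mul_of_nonneg_left key hg.le
    have h6 : (h ^ 6) ^ 2 = h ^ 12 := by ring
    rw [h6, hA]
    nlinarith
  refine ⟨-A / (B + 1), div_pos (by linarith) (by linarith), fun s hs hs0 => ?_⟩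
  have hneg : energyE m l g σ k ρ0 p ε0 δ0 φ ψ φd ψd s < 0 := by
    have h1 := hE s
    rw [le_div_iff₀ (by linarith)] at hs0
    nlinarith [mul_nonneg hs.le hB0]
  set c := (Real.sqrt (energyJ m l ρ0 φ ψ))⁻¹ with hc
  have hc2 : c ^ 2 * energyJ m l ρ0 φ ψ = 1 := by
    rw [hc, inv_pow, Real.sq_sqrt hJ.le, inv_mul_cancel₀ hJ.ne']
  have hc0 : 0 < c ^ 2 := by
    have := Real.sqrt_pos.2 hJ
    positivity
  have adm : Admissible m l (fun x => c * φ x) (fun x => c * ψ x) (fun x => c * φd x)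
      (fun x => c * ψd x) := by
    refine ⟨pwC1_of hm hl (fun x => (dφ x).const_mul c) (by fun_prop),
      pwC1_of hm hl (fun x => (dψ x).const_mul c) (by fun_prop), ?_, ?_, ?_, ?_⟩ <;>
    simp [hφ, hψ, u1, u2]
  have nJ : energyJ m l ρ0 (fun x => c * φ x) (fun x => c * ψ x) = 1 := by
    rw [energyJ_scale, hc2]
  have nE : energyE m l g σ k ρ0 p ε0 δ0 (fun x => c * φ x) (fun x => c * ψ x)
      (fun x => c * φd x) (fun x => c * ψd x) s < 0 := by
    rw [energyE_scale]
    exact mul_neg_of_pos_of_neg hc0 hneg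
  refine ⟨?_, _, _, _, _, adm, nJ, nE⟩
  refine lt_of_le_of_lt (csInf_le ⟨-(g * k), ?_⟩ ⟨_, _, _, _, adm, nJ, rfl⟩) nE
  rintro e ⟨φ', ψ', φd', ψd', had, hJ1, rfl⟩
  have := energy_lower (s := s) hm hl hg hσ hk hs hprof had
  rwa [hJ1, mul_one] at this

end RT
end
end

section
/- Assume σ > 0. Suppose s > 0 and an admissible pair (φ,ψ) with J(φ,ψ) = 1 satisfy E(φ,ψ;s) = −s². Then s² ≤ g·k, ψ(0)² ≤ 2g/(σ k), and s² ≤ g·(g(ρ0⁺ − ρ0⁻) − σ k²)/(σ k). In particular the growth rate λ = s tends to 0 both as k → 0 and as k² → g(ρ0⁺ − ρ0⁻)/σ. -/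
open Set MeasureTheory intervalIntegral Filter Topology

noncomputable section

namespace RT

/-- `f` agrees on `(a,b)` with a function continuous on `[a,b]`. -/
def PC (a b : ℝ) (f : ℝ → ℝ) : Prop :=
  ∃ F : ℝ → ℝ, ContinuousOn F (Icc a b) ∧ EqOn f F (Ioo a b)

theorem PC.add {a b : ℝ} {f h : ℝ → ℝ} (hf : PC a b f) (hh : PC a b h) :
    PC a b (fun x => f x + h x) := by
  obtain ⟨F, hF, e⟩ := hf
  obtain ⟨H, hH, e'⟩ := hh
  exact ⟨fun x => F x + H x, hF.add hH, fun x hx => by simp only [e hx, e' hx]⟩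

theorem PC.mul {a b : ℝ} {f h : ℝ → ℝ} (hf : PC a b f) (hh : PC a b h) :
    PC a b (fun x => f x * h x) := by
  obtain ⟨F, hF, e⟩ := hf
  obtain ⟨H, hH, e'⟩ := hh
  exact ⟨fun x => F x * H x, hF.mul hH, fun x hx => by simp only [e hx, e' hx]⟩

theorem PC.sub {a b : ℝ} {f h : ℝ → ℝ} (hf : PC a b f) (hh : PC a b h) :
    PC a b (fun x => f x - h x) := by
  obtain ⟨F, hF, e⟩ := hf
  obtain ⟨H, hH, e'⟩ := hh
  exact ⟨fun x => F x - H x, hF.sub hH, fun x hx => by simp only [e hx, e' hx]⟩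

theorem PC.sq {a b : ℝ} {f : ℝ → ℝ} (hf : PC a b f) : PC a b (fun x => f x ^ 2) := by
  obtain ⟨F, hF, e⟩ := hf
  exact ⟨fun x => F x ^ 2, hF.pow 2, fun x hx => by simp only [e hx]⟩

theorem PC.const {a b : ℝ} (c : ℝ) : PC a b (fun _ => c) :=
  ⟨fun _ => c, continuousOn_const, fun _ _ => rfl⟩

theorem PC.integrableOn {a b : ℝ} {f : ℝ → ℝ} (hf : PC a b f) :
    IntegrableOn f (Icc a b) := by
  obtain ⟨F, hF, e⟩ := hf
  rw [integrableOn_Icc_iff_integrableOn_Ioo]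
  exact ((hF.integrableOn_Icc).mono_set Ioo_subset_Icc_self).congr_fun e.symm measurableSet_Ioo

theorem PC.intervalIntegrable {a b : ℝ} (hab : a ≤ b) {f : ℝ → ℝ} (hf : PC a b f) :
    IntervalIntegrable f volume a b := by
  rw [intervalIntegrable_iff_integrableOn_Icc_of_le hab]
  exact hf.integrableOn

/-- The estimates on one of the two pieces. -/
theorem piece (a b g k s : ℝ) (ρ p ε δ φ ψ φd ψd F : ℝ → ℝ) (hab : a < b)
    (hg : 0 < g) (hk : 0 < k) (hs : 0 < s)
    (hF : ContinuousOn F (Icc a b)) (hρF : EqOn ρ F (Ioo a b))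
    (hp : PC a b p) (hε : PC a b ε) (hδ : PC a b δ) (hφ : PC a b φ) (hφd : PC a b φd)
    (hψd : PC a b ψd) (hψ : ContinuousOn ψ (Icc a b))
    (pρ : ∀ x ∈ Ioo a b, 0 < ρ x) (pp : ∀ x ∈ Ioo a b, 0 < p x)
    (pε : ∀ x ∈ Ioo a b, 0 < ε x) (pδ : ∀ x ∈ Ioo a b, 0 ≤ δ x)
    (dψ : ∀ x ∈ Ioo a b, HasDerivAt ψ (ψd x) x)
    (dρ : ∀ x ∈ Ioo a b, HasDerivAt ρ (-g * ρ x / p x) x) :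
    (-(g * k) * (∫ x in a..b, ρ x * ((φ x) ^ 2 + (ψ x) ^ 2)) ≤
      ∫ x in a..b, ((s * δ x + p x * ρ x) * (ψd x + k * φ x) ^ 2
        - 2 * g * ρ x * k * φ x * ψ x)) ∧
    (0 ≤ ∫ x in a..b, (ε x * ((φd x - k * ψ x) ^ 2 + (ψd x - k * φ x) ^ 2
        + (1 / 3) * (ψd x + k * φ x) ^ 2))) ∧
    (g * F b * ψ b ^ 2 - g * F a * ψ a ^ 2 ≤
      ∫ x in a..b, ((s * δ x + p x * ρ x) * (ψd x + k * φ x) ^ 2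
        - 2 * g * ρ x * k * φ x * ψ x)) := by
  have hρ : PC a b ρ := ⟨F, hF, hρF⟩
  have hψ' : PC a b ψ := ⟨ψ, hψ, fun _ _ => rfl⟩
  have c : ∀ c : ℝ, PC a b (fun _ => c) := PC.const
  have hA : PC a b (fun x => (s * δ x + p x * ρ x) * (ψd x + k * φ x) ^ 2
        - 2 * g * ρ x * k * φ x * ψ x) :=
    ((((c s).mul hδ).add (hp.mul hρ)).mul (hψd.add ((c k).mul hφ)).sq).sub
      (((((c (2 * g)).mul hρ).mul (c k)).mul hφ).mul hψ')
  have hN : PC a b (fun x => ρ x * ((φ x) ^ 2 + (ψ x) ^ 2)) := hρ.mul (hφ.sq.add hψ'.sq)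
  have hB : PC a b (fun x => ε x * ((φd x - k * ψ x) ^ 2 + (ψd x - k * φ x) ^ 2
        + (1 / 3) * (ψd x + k * φ x) ^ 2)) :=
    hε.mul (((hφd.sub ((c k).mul hψ')).sq.add (hψd.sub ((c k).mul hφ)).sq).add
      ((c (1 / 3)).mul (hψd.add ((c k).mul hφ)).sq))
  refine ⟨?_, ?_, ?_⟩
  · rw [← intervalIntegral.integral_const_mul]
    refine intervalIntegral.integral_mono_on_of_le_Ioo hab.le
      ((hN.intervalIntegrable hab.le).const_mul _) (hA.intervalIntegrable hab.le) ?_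
    intro x hx
    have h1 := pρ x hx
    have h2 := pp x hx
    have h4 := pδ x hx
    have h5 : 0 ≤ (s * δ x + p x * ρ x) * (ψd x + k * φ x) ^ 2 := by positivity
    have h6 : 0 ≤ g * k * ρ x * (φ x - ψ x) ^ 2 := by positivity
    nlinarith
  · have h0 : (0 : ℝ) = ∫ x in a..b, (0 : ℝ) := by simp
    rw [h0]
    refine intervalIntegral.integral_mono_on_of_le_Ioo hab.le
      (by simp) (hB.intervalIntegrable hab.le) ?_
    intro x hx
    have h3 := pε x hx
    positivity
  · refine intervalIntegral.sub_le_integral_of_hasDeriv_right_of_le hab.le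
      (g := fun x => g * F x * ψ x ^ 2)
      (g' := fun x => g * (-g * ρ x / p x) * ψ x ^ 2 + g * ρ x * (2 * ψ x * ψd x))
      ((continuousOn_const.mul hF).mul (hψ.pow 2)) ?_ hA.integrableOn ?_
    · intro x hx
      have hF' : HasDerivAt F (-g * ρ x / p x) x :=
        (dρ x hx).congr_of_eventuallyEq
          (Filter.eventuallyEq_of_mem (Ioo_mem_nhds hx.1 hx.2) hρF.symm)
      have := ((hF'.const_mul g).mul ((dψ x hx).pow 2)).hasDerivWithinAt (s := Ioi x)
      refine this.congr_deriv ?_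
      rw [hρF hx]
      simp
    · intro x hx
      have h1 := pρ x hx
      have h2 := pp x hx
      have h4 := pδ x hx
      have h5 : 0 ≤ s * δ x * (ψd x + k * φ x) ^ 2 := by positivity
      have h6 : 0 ≤ p x * ρ x * (ψd x + k * φ x - g * ψ x / p x) ^ 2 := by positivity
      have h7 : p x * ρ x * (ψd x + k * φ x - g * ψ x / p x) ^ 2
          = p x * ρ x * (ψd x + k * φ x) ^ 2 - 2 * g * ρ x * k * φ x * ψ x
            - (g * (-g * ρ x / p x) * ψ x ^ 2 + g * ρ x * (2 * ψ x * ψd x)) := by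
        field_simp
        ring
      linarith

/-- Bounds on the growth rate: if an admissible normalized pair satisfies
`E(φ,ψ;s) = -s²`, then `s² ≤ g k`, `ψ(0)² ≤ 2g/(σ k)`, and
`s² ≤ g (g(ρ0⁺ - ρ0⁻) - σ k²)/(σ k)`.  Here `ρ0⁺ = ρ0 0` and `ρ0⁻` is the left limit
of `ρ0` at `0`.  (In particular `λ = s → 0` as `k → 0` and as `k² → g(ρ0⁺ - ρ0⁻)/σ`.) -/
theorem growth_rate_bounds (m l g σ k s : ℝ) (ρ0 p ε0 δ0 φ ψ φd ψd : ℝ → ℝ)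
    (ρ0minus : ℝ)
    (hm : 0 < m) (hl : 0 < l) (hg : 0 < g) (hσ : 0 < σ) (hk : 0 < k) (hs : 0 < s)
    (hprof : ProfilesHyp m l ρ0 p ε0 δ0)
    (hhydro : Hydrostatic m l g ρ0 p)
    (hρm : Tendsto ρ0 (𝓝[<] 0) (𝓝 ρ0minus))
    (hadm : Admissible m l φ ψ φd ψd)
    (hJ : energyJ m l ρ0 φ ψ = 1)
    (hE : energyE m l g σ k ρ0 p ε0 δ0 φ ψ φd ψd s = -s ^ 2) :
    s ^ 2 ≤ g * k ∧
    (ψ 0) ^ 2 ≤ 2 * g / (σ * k) ∧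
    s ^ 2 ≤ g * (g * (ρ0 0 - ρ0minus) - σ * k ^ 2) / (σ * k) := by
  obtain ⟨hρ, hp, hε, hδ, pρ, pp, pε, pδ⟩ := hprof
  obtain ⟨⟨cφ, dφ1, dφ2, eφ⟩, ⟨cψ, dψ1, dψ2, eψ⟩, bφ1, bφ2, bψ1, bψ2⟩ := hadm
  have prL : ∀ {f : ℝ → ℝ}, Profile m l f → PC (-m) 0 f := fun h => by
    obtain ⟨F, hF, e⟩ := h.1
    exact ⟨F, hF, e.mono Ioo_subset_Ico_self⟩
  have prR : ∀ {f : ℝ → ℝ}, Profile m l f → PC 0 l f := fun h => ⟨_, h.2, fun _ _ => rfl⟩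
  have pcL : ∀ {f : ℝ → ℝ}, PiecewiseCont m l f → PC (-m) 0 f := fun h => by
    obtain ⟨F, hF, e⟩ := h.1
    exact ⟨F, hF, e.mono Ioo_subset_Ico_self⟩
  have pcR : ∀ {f : ℝ → ℝ}, PiecewiseCont m l f → PC 0 l f := fun h => by
    obtain ⟨F, hF, e⟩ := h.2
    exact ⟨F, hF, e.mono Ioo_subset_Ioc_self⟩
  have sL : Icc (-m) 0 ⊆ Icc (-m) l := Icc_subset_Icc le_rfl hl.le
  have sR : Icc 0 l ⊆ Icc (-m) l := Icc_subset_Icc (by linarith) le_rfl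
  have oL : Ioo (-m) 0 ⊆ Icc (-m) l := Ioo_subset_Icc_self.trans sL
  have oR : Ioo 0 l ⊆ Icc (-m) l := Ioo_subset_Icc_self.trans sR
  obtain ⟨F, hF, eF⟩ := hρ.1
  have hm0 : -m < 0 := by linarith
  have hF0 : F 0 = ρ0minus := by
    have h1 : Tendsto F (𝓝[Ioo (-m) 0] 0) (𝓝 (F 0)) :=
      (hF 0 ⟨hm0.le, le_rfl⟩).mono Ioo_subset_Icc_self
    rw [nhdsWithin_Ioo_eq_nhdsLT hm0] at h1
    refine tendsto_nhds_unique (h1.congr' ?_) hρm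
    filter_upwards [Ioo_mem_nhdsLT hm0] with x hx
    exact (eF ⟨hx.1.le, hx.2⟩).symm
  obtain ⟨L1, L2, L3⟩ := piece (-m) 0 g k s ρ0 p ε0 δ0 φ ψ φd ψd F hm0 hg hk hs hF
    (eF.mono Ioo_subset_Ico_self) (prL hp) (prL hε) (prL hδ)
    ⟨φ, cφ.mono sL, fun _ _ => rfl⟩ (pcL eφ) (pcL eψ) (cψ.mono sL)
    (fun x hx => pρ x (oL hx)) (fun x hx => pp x (oL hx)) (fun x hx => pε x (oL hx))
    (fun x hx => pδ x (oL hx))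
    (fun x hx => (dψ1 x ⟨hx.1.le, hx.2⟩).hasDerivAt (Icc_mem_nhds hx.1 hx.2))
    (fun x hx => (hhydro.1 x ⟨hx.1.le, hx.2⟩).hasDerivAt (Ico_mem_nhds hx.1 hx.2))
  obtain ⟨R1, R2, R3⟩ := piece 0 l g k s ρ0 p ε0 δ0 φ ψ φd ψd ρ0 hl hg hk hs hρ.2
    (fun _ _ => rfl) (prR hp) (prR hε) (prR hδ)
    ⟨φ, cφ.mono sR, fun _ _ => rfl⟩ (pcR eφ) (pcR eψ) (cψ.mono sR)
    (fun x hx => pρ x (oR hx)) (fun x hx => pp x (oR hx)) (fun x hx => pε x (oR hx))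
    (fun x hx => pδ x (oR hx))
    (fun x hx => (dψ2 x ⟨hx.1, hx.2.le⟩).hasDerivAt (Icc_mem_nhds hx.1 hx.2))
    (fun x hx => (hhydro.2 x ⟨hx.1, hx.2.le⟩).hasDerivAt (Ioc_mem_nhds hx.1 hx.2))
  rw [bψ1, hF0] at L3
  rw [bψ2] at R3
  unfold energyJ pwInt at hJ
  unfold energyE pwInt at hE
  have hB := mul_nonneg (half_pos hs).le (add_nonneg L2 R2)
  have hkey : s ^ 2 + σ * k ^ 2 / 2 * ψ 0 ^ 2 ≤ g * k := by
    have hJ' := congrArg (fun t => g * k * t) hJ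
    simp only at hJ'
    linarith
  have hkey2 : s ^ 2 ≤ (g * (ρ0 0 - ρ0minus) - σ * k ^ 2) / 2 * ψ 0 ^ 2 := by
    linarith
  have hσk : 0 < σ * k := mul_pos hσ hk
  have hb : (ψ 0) ^ 2 ≤ 2 * g / (σ * k) := by
    rw [le_div_iff₀ hσk]
    have h1 : k * (ψ 0 ^ 2 * (σ * k)) ≤ k * (2 * g) := by nlinarith [sq_nonneg s]
    exact le_of_mul_le_mul_left h1 hk
  refine ⟨?_, hb, ?_⟩
  · have : 0 ≤ σ * k ^ 2 / 2 * ψ 0 ^ 2 := by positivity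
    linarith
  · have hs2 : 0 < s ^ 2 := by positivity
    have hpos : 0 ≤ (g * (ρ0 0 - ρ0minus) - σ * k ^ 2) / 2 := by
      by_contra! h
      nlinarith [sq_nonneg (ψ 0)]
    calc s ^ 2 ≤ _ := hkey2
      _ ≤ (g * (ρ0 0 - ρ0minus) - σ * k ^ 2) / 2 * (2 * g / (σ * k)) :=
        mul_le_mul_of_nonneg_left hb hpos
      _ = _ := by ring

end RT
end
end
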